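/- There exist constants 0 < c < C such that the probability that the diameter of the uniform random recursive tree T_n (the length of the longest shortest path in the tree, viewed as a simple graph) lies in the interval [c·ln n, C·ln n] tends to 1 as n → ∞. -/

import Mathlib

open MeasureTheory ProbabilityTheory Filter

/-- The sample space of parent choices for the uniform random recursive tree on
`{0, 1, …, n-1}`: for each `j : Fin (n-1)`, the parent of vertex `j+1` is an element of
`{0, …, j}`, encoded as `Fin (j+1)`. -/
abbrev URTSpace (n : ℕ) : Type := (j : Fin (n - 1)) → Fin ((j : ℕ) + 1)

/-- The law of the uniform random recursive tree: all the parents are chosen independently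
and uniformly at random. -/
noncomputable def urtMeasure (n : ℕ) : Measure (URTSpace n) :=
  Measure.pi fun j => (PMF.uniformOfFintype (Fin ((j : ℕ) + 1))).toMeasure

/-- The uniform random recursive tree with parent map `p`, as a simple graph on `Fin n`:
its edges are `{j+1, p j}` for `1 ≤ j+1 ≤ n-1`. -/
def urtGraph (n : ℕ) (p : URTSpace n) : SimpleGraph (Fin n) :=
  SimpleGraph.fromEdgeSet
    {e | ∃ j : Fin (n - 1),
      e = s(⟨(j : ℕ) + 1, by have := j.isLt; omega⟩,
            ⟨(p j : ℕ), by have := j.isLt; have := (p j).isLt; omega⟩)}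

def urtDepth (n : ℕ) (p : URTSpace n) : ℕ → ℕ
  | 0 => 0
  | i + 1 => if h : i < n - 1 then urtDepth n p (p ⟨i, h⟩ : ℕ) + 1 else 0
termination_by i => i
decreasing_by exact (p ⟨i, h⟩).isLt

lemma urtDepth_zero (n : ℕ) (p : URTSpace n) : urtDepth n p 0 = 0 := by
  rw [urtDepth]

lemma urtDepth_succ (n : ℕ) (p : URTSpace n) (j : Fin (n - 1)) :
    urtDepth n p (j + 1) = urtDepth n p (p j : ℕ) + 1 := by
  rw [urtDepth]; simp

lemma urtDepth_update (n : ℕ) (p : URTSpace n) (j : Fin (n - 1)) (k : Fin ((j : ℕ) + 1)) (i : ℕ)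
    (hi : i ≤ j) : urtDepth n (Function.update p j k) i = urtDepth n p i := by
  induction i using Nat.strong_induction_on with
  | _ i ih =>
    cases i with
    | zero => simp [urtDepth_zero]
    | succ i =>
      have h : i < n - 1 := by omega
      have e1 := urtDepth_succ n p ⟨i, h⟩
      have e2 := urtDepth_succ n (Function.update p j k) ⟨i, h⟩
      have hne : (⟨i, h⟩ : Fin (n - 1)) ≠ j := by
        intro h'; rw [← h'] at hi; simp at hi
      rw [Function.update_of_ne hne] at e2
      simp only at e1 e2
      rw [e1, e2, ih _ (p ⟨i, h⟩).isLt]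
      have := (p ⟨i, h⟩).isLt
      simp only at this
      omega

def urtSwap (n : ℕ) (j : Fin (n - 1)) :
    URTSpace n × Fin ((j : ℕ) + 1) ≃ URTSpace n × Fin ((j : ℕ) + 1) :=
  Function.Involutive.toPerm (fun x => (Function.update x.1 j x.2, x.1 j)) (by
    rintro ⟨p, k⟩
    simp)

lemma urt_resample (n : ℕ) (j : Fin (n - 1)) (f : URTSpace n → ℝ) :
    ∑ k : Fin ((j : ℕ) + 1), ∑ p : URTSpace n, f (Function.update p j k)
      = ((j : ℕ) + 1) * ∑ p, f p := by
  have h1 : ∑ x : URTSpace n × Fin ((j : ℕ) + 1), f (urtSwap n j x).1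
      = ∑ x : URTSpace n × Fin ((j : ℕ) + 1), f x.1 :=
    Equiv.sum_comp (urtSwap n j) (fun x => f x.1)
  rw [Fintype.sum_prod_type, Fintype.sum_prod_type, Finset.sum_comm] at h1
  change ∑ k : Fin ((j : ℕ) + 1), ∑ p : URTSpace n, f (Function.update p j k) = _ at h1
  rw [h1]
  simp [Finset.mul_sum]

instance (n : ℕ) : IsProbabilityMeasure (urtMeasure n) := by
  unfold urtMeasure; infer_instance

lemma urt_integral (n : ℕ) : ∃ K : ℝ, ∀ f : URTSpace n → ℝ,
    ∫ p, f p ∂(urtMeasure n) = K * ∑ p, f p := by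
  refine ⟨(∏ j : Fin (n - 1), (((j : ℕ) + 1 : ENNReal))⁻¹).toReal, fun f => ?_⟩
  rw [integral_fintype (Integrable.of_finite), Finset.mul_sum]
  refine Finset.sum_congr rfl fun p _ => ?_
  rw [smul_eq_mul, measureReal_def, urtMeasure, Measure.pi_singleton]
  congr 3
  ext j
  rw [PMF.toMeasure_apply_singleton _ _ (measurableSet_singleton _)]
  simp

/-- generating function -/
noncomputable def urtE (n : ℕ) (z : ℝ) (i : ℕ) : ℝ := ∫ p, z ^ (urtDepth n p i) ∂(urtMeasure n)

lemma urtE_zero (n : ℕ) (z : ℝ) : urtE n z 0 = 1 := by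
  simp [urtE, urtDepth_zero]

lemma urtE_succ (n : ℕ) (z : ℝ) (i : ℕ) (h : i < n - 1) :
    ((i : ℝ) + 1) * urtE n z (i + 1) = z * ∑ k ∈ Finset.range (i + 1), urtE n z k := by
  obtain ⟨K, hK⟩ := urt_integral n
  have h1 := urt_resample n ⟨i, h⟩ (fun p => z ^ urtDepth n p (i + 1))
  simp only [urtE, hK]
  have h2 : ∀ (k : Fin (i + 1)) (p : URTSpace n),
      urtDepth n (Function.update p ⟨i, h⟩ k) (i + 1) = urtDepth n p k + 1 := by
    intro k p
    have := urtDepth_succ n (Function.update p ⟨i, h⟩ k) ⟨i, h⟩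
    simp only [Function.update_self] at this
    rw [this, urtDepth_update _ _ ⟨i, h⟩]
    have := k.isLt
    simp only; omega
  simp only [h2, pow_succ] at h1
  rw [← Finset.mul_sum, Finset.sum_range (fun k => ∑ p : URTSpace n, z ^ urtDepth n p k)]
  simp only [← Finset.sum_mul] at h1
  linear_combination (-K) * h1

lemma urtE_two (n : ℕ) (i : ℕ) (h : i < n) : urtE n 2 i = i + 1 := by
  induction i using Nat.strong_induction_on with
  | _ i ih =>
    cases i with
    | zero => simp [urtE_zero]
    | succ i =>
      have h1 := urtE_succ n 2 i (by omega)
      rw [Finset.sum_congr rfl (g := fun k : ℕ => (k : ℝ) + 1)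
        (fun k hk => ih k (by simpa using hk) (by have := Finset.mem_range.1 hk; omega))] at h1
      have h2 : ∀ m : ℕ, ∑ k ∈ Finset.range m, ((k : ℝ) + 1) = m * (m + 1) / 2 := by
        intro m
        induction m with
        | zero => simp
        | succ m ihm => rw [Finset.sum_range_succ, ihm]; push_cast; ring
      rw [h2] at h1
      have h3 : (i : ℝ) + 1 ≠ 0 := by positivity
      apply mul_left_cancel₀ h3
      rw [h1]; push_cast; ring

lemma urtE_third_sum (n : ℕ) (i : ℕ) (h : i + 1 ≤ n) :
    0 ≤ ∑ k ∈ Finset.range (i + 1), urtE n (1/3) k ∧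
    (∑ k ∈ Finset.range (i + 1), urtE n (1/3) k) ^ 2 ≤ i + 1 := by
  induction i with
  | zero => simp [urtE_zero]
  | succ i ih =>
    obtain ⟨h0, h1⟩ := ih (by omega)
    have h2 := urtE_succ n (1/3) i (by omega)
    rw [Finset.sum_range_succ]
    set S := ∑ k ∈ Finset.range (i + 1), urtE n (1/3) k
    have hi : (0 : ℝ) < (i : ℝ) + 1 := by positivity
    have h3 : urtE n (1/3) (i + 1) = S * (1 / (3 * ((i : ℝ) + 1))) := by
      field_simp; linarith
    rw [h3]
    refine ⟨by positivity, ?_⟩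
    have h4 : S + S * (1 / (3 * ((i : ℝ) + 1))) = S * (1 + 1 / (3 * ((i : ℝ) + 1))) := by ring
    rw [h4, mul_pow]
    calc _ ≤ ((i : ℝ) + 1) * (1 + 1 / (3 * ((i : ℝ) + 1))) ^ 2 := by gcongr
      _ ≤ _ := by
        push_cast
        have : ((i : ℝ) + 1) * (1 + 1 / (3 * ((i : ℝ) + 1))) ^ 2
          = ((i : ℝ) + 1) + 2 / 3 + 1 / (9 * ((i : ℝ) + 1)) := by field_simp; ring
        rw [this]
        have : 1 / (9 * ((i : ℝ) + 1)) ≤ 1 / 9 := by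
          apply one_div_le_one_div_of_le <;> linarith [Nat.cast_nonneg (α := ℝ) i]
        linarith

lemma urtE_third (n : ℕ) (h : 2 ≤ n) : urtE n (1/3) (n - 1) ≤ (Real.sqrt n)⁻¹ := by
  obtain ⟨m, rfl⟩ : ∃ m, n = m + 2 := ⟨n - 2, by omega⟩
  have h2 := urtE_succ (m + 2) (1/3) m (by omega)
  obtain ⟨h0, h1⟩ := urtE_third_sum (m + 2) m (by omega)
  set S := ∑ k ∈ Finset.range (m + 1), urtE (m + 2) (1/3) k
  have e : m + 2 - 1 = m + 1 := by omega
  rw [e, ← one_div, le_div_iff₀ (by positivity)]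
  refine le_trans (le_abs_self _) (abs_le_of_sq_le_sq ?_ (by norm_num))
  rw [mul_pow, Real.sq_sqrt (by positivity)]
  have hi : (0 : ℝ) < (m : ℝ) + 1 := by positivity
  have h3 : urtE (m + 2) (1/3) (m + 1) = S * (1 / (3 * ((m : ℝ) + 1))) := by
    field_simp; linarith
  rw [h3, mul_pow]
  calc _ ≤ ((m : ℝ) + 1) * (1 / (3 * ((m : ℝ) + 1))) ^ 2 * (m + 2 : ℕ) := by gcongr
    _ = (m + 2) / (9 * (m + 1)) := by push_cast; field_simp; ring
    _ ≤ 1 ^ 2 := by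
      rw [div_le_iff₀ (by positivity)]; nlinarith [Nat.cast_nonneg (α := ℝ) m]

lemma urt_adj (n : ℕ) (p : URTSpace n) (u v : Fin n) (h : (urtGraph n p).Adj u v) :
    urtDepth n p v ≤ urtDepth n p u + 1 := by
  rw [urtGraph, SimpleGraph.fromEdgeSet_adj] at h
  obtain ⟨⟨j, hj⟩, -⟩ := h
  have := urtDepth_succ n p j
  rw [Sym2.eq_iff] at hj
  rcases hj with ⟨rfl, rfl⟩ | ⟨rfl, rfl⟩
  · simp only; omega
  · simp only; omega

lemma urt_walk (n : ℕ) (p : URTSpace n) (u v : Fin n) (w : (urtGraph n p).Walk u v) :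
    urtDepth n p v ≤ urtDepth n p u + w.length := by
  induction w with
  | nil => simp
  | cons h w ih =>
    have := urt_adj n p _ _ h
    rw [SimpleGraph.Walk.length_cons]; omega

lemma urt_exists_walk (n : ℕ) (p : URTSpace n) (hn : 0 < n) (i : ℕ) (hi : i < n) :
    ∃ w : (urtGraph n p).Walk ⟨i, hi⟩ ⟨0, hn⟩, w.length = urtDepth n p i := by
  induction i using Nat.strong_induction_on with
  | _ i ih =>
    cases i with
    | zero => exact ⟨SimpleGraph.Walk.nil, by simp [urtDepth_zero]⟩
    | succ i =>
      have h : i < n - 1 := by omega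
      have hlt := (p ⟨i, h⟩).isLt
      simp only at hlt
      obtain ⟨w, hw⟩ := ih (p ⟨i, h⟩ : ℕ) hlt (by omega)
      have hadj : (urtGraph n p).Adj ⟨i + 1, hi⟩ ⟨(p ⟨i, h⟩ : ℕ), by omega⟩ := by
        rw [urtGraph, SimpleGraph.fromEdgeSet_adj]
        refine ⟨⟨⟨i, h⟩, rfl⟩, ?_⟩
        intro hh
        have := congrArg Fin.val hh
        simp only at this
        omega
      refine ⟨SimpleGraph.Walk.cons hadj w, ?_⟩
      rw [SimpleGraph.Walk.length_cons, hw]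
      exact (urtDepth_succ n p ⟨i, h⟩).symm

lemma urt_connected (n : ℕ) (p : URTSpace n) (hn : 0 < n) : (urtGraph n p).Connected := by
  haveI : Nonempty (Fin n) := ⟨⟨0, hn⟩⟩
  refine ⟨fun u v => ?_⟩
  obtain ⟨w, -⟩ := urt_exists_walk n p hn u u.isLt
  obtain ⟨w', -⟩ := urt_exists_walk n p hn v v.isLt
  exact ⟨w.append w'.reverse⟩

lemma urt_diam_le (n : ℕ) (p : URTSpace n) (hn : 0 < n) :
    ∃ u v : Fin n, (urtGraph n p).diam ≤ urtDepth n p u + urtDepth n p v := by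
  haveI : Nonempty (Fin n) := ⟨⟨0, hn⟩⟩
  obtain ⟨u, v, h⟩ := (urtGraph n p).exists_dist_eq_diam
  obtain ⟨w, hw⟩ := urt_exists_walk n p hn u u.isLt
  obtain ⟨w', hw'⟩ := urt_exists_walk n p hn v v.isLt
  refine ⟨u, v, ?_⟩
  rw [← h]
  refine (SimpleGraph.dist_le (w.append w'.reverse)).trans ?_
  simp [hw, hw']

lemma urt_le_diam (n : ℕ) (p : URTSpace n) (hn : 0 < n) (v : Fin n) :
    urtDepth n p v ≤ (urtGraph n p).diam := by
  haveI : Nonempty (Fin n) := ⟨⟨0, hn⟩⟩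
  have hc := urt_connected n p hn
  have h1 := SimpleGraph.dist_le_diam (SimpleGraph.connected_iff_ediam_ne_top.1 hc)
    (u := ⟨0, hn⟩) (v := v)
  obtain ⟨w, hw⟩ := hc.exists_walk_length_eq_dist ⟨0, hn⟩ v
  have := urt_walk n p _ _ w
  simp only [urtDepth_zero] at this
  omega

lemma urt_markov (n : ℕ) (f : URTSpace n → ℝ) (hf : ∀ p, 0 ≤ f p) (t : ℝ) (ht : 0 < t) :
    (urtMeasure n).real {p | t ≤ f p} ≤ (∫ p, f p ∂(urtMeasure n)) / t := by
  rw [le_div_iff₀ ht, mul_comm]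
  exact mul_meas_ge_le_integral_of_nonneg (ae_of_all _ hf) Integrable.of_finite t

lemma urt_upper (n : ℕ) (hn : 1 ≤ n) :
    (urtMeasure n).real {p | (n : ℝ) ^ 4 ≤ ∑ i ∈ Finset.range n, (2 : ℝ) ^ urtDepth n p i}
      ≤ (n : ℝ)⁻¹ := by
  have hn' : (1 : ℝ) ≤ n := by exact_mod_cast hn
  refine (urt_markov n _ (fun p => by positivity) _ (by positivity)).trans ?_
  rw [integral_finset_sum _ (fun i _ => Integrable.of_finite)]
  have h : ∑ i ∈ Finset.range n, ∫ p, (2 : ℝ) ^ urtDepth n p i ∂(urtMeasure n) ≤ (n : ℝ) * n := by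
    calc _ ≤ ∑ i ∈ Finset.range n, (n : ℝ) := by
          refine Finset.sum_le_sum fun i hi => ?_
          have hi' := Finset.mem_range.1 hi
          have := urtE_two n i hi'
          rw [urtE] at this
          rw [this]
          exact_mod_cast hi'
      _ = _ := by simp
  rw [div_le_iff₀ (by positivity)]
  refine h.trans ?_
  have : (n : ℝ)⁻¹ * n ^ 4 = n * n * n := by field_simp
  rw [this]
  nlinarith [mul_pos (by linarith : (0:ℝ) < n) (by linarith : (0:ℝ) < n)]

lemma urt_lower (n : ℕ) (hn : 2 ≤ n) :
    (urtMeasure n).real {p | (n : ℝ) ^ (-(1/4) : ℝ) ≤ (1/3 : ℝ) ^ urtDepth n p (n - 1)}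
      ≤ (n : ℝ) ^ (-(1/4) : ℝ) := by
  have hn' : (0 : ℝ) < n := by exact_mod_cast (by omega : 0 < n)
  refine (urt_markov n _ (fun p => by positivity) _ (by positivity)).trans ?_
  rw [div_le_iff₀ (by positivity), ← Real.rpow_add hn']
  refine (urtE_third n hn).trans (le_of_eq ?_)
  rw [Real.sqrt_eq_rpow, ← Real.rpow_neg hn'.le]
  norm_num

lemma urt_bad (n : ℕ) (hn : 2 ≤ n) :
    {p | (1/8 : ℝ) * Real.log n ≤ ((urtGraph n p).diam : ℝ) ∧
            ((urtGraph n p).diam : ℝ) ≤ 16 * Real.log n}ᶜ ⊆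
     {p : URTSpace n | (n : ℝ) ^ 4 ≤ ∑ i ∈ Finset.range n, (2 : ℝ) ^ urtDepth n p i} ∪
     {p | (n : ℝ) ^ (-(1/4) : ℝ) ≤ (1/3 : ℝ) ^ urtDepth n p (n - 1)} := by
  have hn' : (0 : ℝ) < n := by exact_mod_cast (by omega : 0 < n)
  intro p hp
  rw [Set.mem_compl_iff, Set.mem_setOf_eq, not_and_or, not_le, not_le] at hp
  rcases hp with hp | hp
  · right
    have h1 : (urtDepth n p (n - 1) : ℝ) ≤ (urtGraph n p).diam := by
      exact_mod_cast urt_le_diam n p (by omega) ⟨n - 1, by omega⟩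
    rw [Set.mem_setOf_eq, ← Real.rpow_natCast, Real.rpow_def_of_pos hn',
      Real.rpow_def_of_pos (by norm_num), Real.exp_le_exp]
    have h3 : Real.log (1/3) = - Real.log 3 := by rw [one_div, Real.log_inv]
    have h4 : Real.log 3 ≤ 2 := by
      have := Real.log_le_sub_one_of_pos (show (0:ℝ) < 3 by norm_num)
      linarith
    rw [h3]
    have h5 : (0 : ℝ) ≤ urtDepth n p (n - 1) := Nat.cast_nonneg _
    nlinarith
  · left
    obtain ⟨u, v, huv⟩ := urt_diam_le n p (by omega)
    have huv' : ((urtGraph n p).diam : ℝ) ≤ urtDepth n p u + urtDepth n p v := by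
      exact_mod_cast huv
    obtain ⟨i, hi⟩ : ∃ i : Fin n, 8 * Real.log n ≤ urtDepth n p i := by
      by_contra! hcon
      have := hcon u
      have := hcon v
      linarith
    rw [Set.mem_setOf_eq]
    refine le_trans ?_ (Finset.single_le_sum (f := fun i => (2 : ℝ) ^ urtDepth n p i)
      (fun i _ => by positivity) (Finset.mem_range.2 i.isLt))
    rw [← Real.rpow_natCast, ← Real.rpow_natCast, Real.rpow_def_of_pos hn',
      Real.rpow_def_of_pos (by norm_num), Real.exp_le_exp]
    have := Real.log_two_gt_d9
    have h5 : (0 : ℝ) ≤ urtDepth n p i := Nat.cast_nonneg _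
    push_cast
    nlinarith

/-- With high probability the diameter of the uniform random recursive tree is of order
`Θ(ln n)`: there are constants `0 < c < C` such that the probability that the diameter lies
in `[c·ln n, C·ln n]` tends to `1` as `n → ∞`. -/
theorem urt_diameter :
    ∃ c C : ℝ, 0 < c ∧ c < C ∧
      Tendsto (fun n : ℕ =>
          (urtMeasure n {p | c * Real.log n ≤ ((urtGraph n p).diam : ℝ) ∧
            ((urtGraph n p).diam : ℝ) ≤ C * Real.log n}).toReal)
        atTop (nhds 1) := by
  refine ⟨1/8, 16, by norm_num, by norm_num, ?_⟩
  have key : ∀ᶠ n : ℕ in atTop, 1 - ((n : ℝ)⁻¹ + (n : ℝ) ^ (-(1/4) : ℝ)) ≤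
      (urtMeasure n {p | (1/8 : ℝ) * Real.log n ≤ ((urtGraph n p).diam : ℝ) ∧
            ((urtGraph n p).diam : ℝ) ≤ 16 * Real.log n}).toReal := by
    filter_upwards [eventually_ge_atTop 2] with n hn
    have h1 := measureReal_mono (μ := urtMeasure n) (urt_bad n hn)
    have h2 := h1.trans (measureReal_union_le _ _)
    rw [probReal_compl_eq_one_sub (Set.toFinite _).measurableSet] at h2
    have h3 := urt_upper n (by omega)
    have h4 := urt_lower n hn
    rw [← measureReal_def]
    linarith
  have lim : Tendsto (fun n : ℕ => 1 - ((n : ℝ)⁻¹ + (n : ℝ) ^ (-(1/4) : ℝ))) atTop (nhds 1) := by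
    have a := tendsto_inv_atTop_nhds_zero_nat (𝕜 := ℝ)
    have b := (tendsto_rpow_neg_atTop (show (0:ℝ) < 1/4 by norm_num)).comp
      (tendsto_natCast_atTop_atTop (R := ℝ))
    simpa using (a.add b).const_sub 1
  refine tendsto_of_tendsto_of_tendsto_of_le_of_le' lim tendsto_const_nhds key ?_
  exact Eventually.of_forall fun n => measureReal_le_one
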